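/- arXiv:2308.07854 — 4 statements merged into one kernel-verified Lean document; each statement's English description precedes it below -/
import Mathlib

section
/- (Remark: the role of N_B for suboptimality.) Let N_B^(1) ≤ N_B^(2) ≤ N and fix a blocked input sequence ũ : Fin N_B^(2) → U; the blocked problem with horizon N_B^(1) uses the first N_B^(1) entries of ũ. Then V_N^{DMB,(1)}(x) ≤ V_N^{DMB,(2)}(x) for every state x, where V_N^{DMB,(i)}(x) = δ^(i)(x) + V_{N−N_B^(i)}(x_{N_B^(i)}) with δ^(i)(x) = ∑_{k=0}^{N_B^(i)−1} ℓ(x_ũ(k), ũ(k)) and x_{N_B^(i)} the N_B^(i)-step prediction from x under ũ. -/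
open scoped ENNReal

/-- Open-loop trajectory: `traj f x u k` is the state after `k` steps of the
dynamics `f` starting from `x` under the input sequence `u`. -/
noncomputable def traj {X U : Type*} (f : X → U → X) (x : X) (u : ℕ → U) : ℕ → X
  | 0 => x
  | k + 1 => f (traj f x u k) (u k)

/-- Extension of a finite input sequence `u : Fin N → U` to `ℕ → U`
(arbitrary values after time `N`). -/
noncomputable def extSeq {U : Type*} [Nonempty U] {N : ℕ} (u : Fin N → U) : ℕ → U :=
  fun k => if h : k < N then u ⟨k, h⟩ else Classical.arbitrary U

/-- Finite-horizon value function
`V f ℓ N x = ⨅_{u : Fin N → U} ∑_{k=0}^{N-1} ℓ(x_u(k), u(k))`, with `V 0 ≡ 0`. -/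
noncomputable def V {X U : Type*} [Nonempty U] (f : X → U → X) (ℓ : X → U → ℝ≥0∞)
    (N : ℕ) (x : X) : ℝ≥0∞ :=
  ⨅ u : Fin N → U, ∑ k ∈ Finset.range N, ℓ (traj f x (extSeq u) k) (extSeq u k)

/-- Infinite-horizon value function
`Vinf f ℓ x = ⨅_{u : ℕ → U} ∑_{k=0}^{∞} ℓ(x_u(k), u(k))`. -/
noncomputable def Vinf {X U : Type*} (f : X → U → X) (ℓ : X → U → ℝ≥0∞) (x : X) : ℝ≥0∞ :=
  ⨅ u : ℕ → U, ∑' k : ℕ, ℓ (traj f x u k) (u k)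

/-- Closed-loop trajectory under the feedback law `μ`. -/
noncomputable def clTraj {X U : Type*} (f : X → U → X) (μ : X → U) (x : X) : ℕ → X
  | 0 => x
  | k + 1 => f (clTraj f μ x k) (μ (clTraj f μ x k))

/-- Infinite-horizon closed-loop cost of the feedback law `μ`:
`Vcl f ℓ μ x = ∑_{k=0}^{∞} ℓ(x_k, μ(x_k))`. -/
noncomputable def Vcl {X U : Type*} (f : X → U → X) (ℓ : X → U → ℝ≥0∞) (μ : X → U)
    (x : X) : ℝ≥0∞ :=
  ∑' k : ℕ, ℓ (clTraj f μ x k) (μ (clTraj f μ x k))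

/-- The trajectory after `k + 1` steps is the `k`-step trajectory from the first successor state
under the shifted input sequence. -/
theorem traj_succ_eq_traj_shift {X U : Type*} (f : X → U → X) (x : X) (u : ℕ → U) (k : ℕ) :
    traj f x u (k + 1) = traj f (f x (u 0)) (fun j => u (j + 1)) k := by
  induction k with
  | zero => rfl
  | succ k ih => rw [traj, ih, traj]

theorem extSeq_cons_zero {U : Type*} [Nonempty U] {n : ℕ} (a : U) (v : Fin n → U) :
    extSeq (Fin.cons a v : Fin (n + 1) → U) 0 = a := by
  simp [extSeq]

theorem extSeq_cons_succ {U : Type*} [Nonempty U] {n : ℕ} (a : U) (v : Fin n → U) (k : ℕ) :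
    extSeq (Fin.cons a v : Fin (n + 1) → U) (k + 1) = extSeq v k := by
  by_cases h : k < n
  · simpa [extSeq, h] using Fin.cons_succ (α := fun _ => U) a v ⟨k, h⟩
  · simp [extSeq, h]

/-- The easy half of the Bellman equation. -/
theorem V_succ_le {X U : Type*} [Nonempty U] (f : X → U → X) (ℓ : X → U → ℝ≥0∞)
    (n : ℕ) (x : X) (a : U) :
    V f ℓ (n + 1) x ≤ ℓ x a + V f ℓ n (f x a) := by
  unfold V
  rw [ENNReal.add_iInf]
  refine le_iInf fun v => iInf_le_of_le (Fin.cons a v) ?_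
  simp only [Finset.sum_range_succ', traj_succ_eq_traj_shift, extSeq_cons_succ,
    extSeq_cons_zero]
  rw [add_comm, traj]

/-- Applying a prescribed input sequence for longer before optimizing cannot decrease the cost. -/
theorem dmb_cost_le_of_le {X U : Type*} [Nonempty U] (f : X → U → X) (ℓ : X → U → ℝ≥0∞)
    {N m n : ℕ} (hmn : m ≤ n) (hnN : n ≤ N) (u : ℕ → U) (x : X) :
    (∑ k ∈ Finset.range m, ℓ (traj f x u k) (u k)) + V f ℓ (N - m) (traj f x u m) ≤
      (∑ k ∈ Finset.range n, ℓ (traj f x u k) (u k)) + V f ℓ (N - n) (traj f x u n) := by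
  induction n, hmn using Nat.le_induction with
  | base => exact le_rfl
  | succ n _ ih =>
    refine (ih (by omega)).trans ?_
    rw [Finset.sum_range_succ, add_assoc, show N - n = N - (n + 1) + 1 by omega]
    gcongr
    exact V_succ_le f ℓ _ _ _

/-- The role of `N_B` for suboptimality: if `N_B⁽¹⁾ ≤ N_B⁽²⁾ ≤ N`, then
`V_N^{DMB,(1)}(x) ≤ V_N^{DMB,(2)}(x)`, where the blocked problem with horizon
`N_B⁽¹⁾` uses the first `N_B⁽¹⁾` entries of `ũ`. -/
theorem dmb_monotone_in_blocking_horizon {X U : Type*} [Nonempty X] [Nonempty U]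
    (f : X → U → X) (ℓ : X → U → ℝ≥0∞) (N NB1 NB2 : ℕ)
    (h12 : NB1 ≤ NB2) (h2N : NB2 ≤ N) (ut : Fin NB2 → U) (x : X) :
    (∑ k ∈ Finset.range NB1, ℓ (traj f x (extSeq ut) k) (extSeq ut k)) +
        V f ℓ (N - NB1) (traj f x (extSeq ut) NB1) ≤
      (∑ k ∈ Finset.range NB2, ℓ (traj f x (extSeq ut) k) (extSeq ut k)) +
        V f ℓ (N - NB2) (traj f x (extSeq ut) NB2) := by
  exact dmb_cost_le_of_le f ℓ h12 h2N (extSeq ut) x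
end

section
/- (Proposition, relaxed dynamic programming.) Let μ̃ : X → U be a feedback law, Ṽ : X → ℝ≥0∞, and α ∈ [0,1] a real number, and suppose the inequality Ṽ(x) ≥ Ṽ(f(x, μ̃(x))) + α·ℓ(x, μ̃(x)) holds for all x ∈ X. Then for all x ∈ X the estimate α·V_∞(x) ≤ α·V_∞^{μ̃}(x) ≤ Ṽ(x) holds. -/
open scoped ENNReal

/-- The closed-loop trajectory is the open-loop trajectory under the inputs it generates. -/
theorem traj_feedback_eq_clTraj {X U : Type*} (f : X → U → X) (μ : X → U) (x : X) (k : ℕ) :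
    traj f x (fun j => μ (clTraj f μ x j)) k = clTraj f μ x k := by
  induction k with
  | zero => rfl
  | succ k ih => simp only [traj, clTraj, ih]

theorem Vinf_le_Vcl {X U : Type*} (f : X → U → X) (ℓ : X → U → ℝ≥0∞) (μ : X → U) (x : X) :
    Vinf f ℓ x ≤ Vcl f ℓ μ x := by
  refine (iInf_le _ fun j => μ (clTraj f μ x j)).trans_eq ?_
  simp only [traj_feedback_eq_clTraj, Vcl]

/-- Telescoped form of the relaxed dynamic programming inequality. -/
theorem clTraj_add_sum_le {X U : Type*} {f : X → U → X} {ℓ : X → U → ℝ≥0∞} {μ : X → U}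
    {W : X → ℝ≥0∞} {a : ℝ≥0∞} (h : ∀ x, W (f x (μ x)) + a * ℓ x (μ x) ≤ W x) (x : X) (n : ℕ) :
    W (clTraj f μ x n) +
      ∑ k ∈ Finset.range n, a * ℓ (clTraj f μ x k) (μ (clTraj f μ x k)) ≤ W x := by
  induction n with
  | zero => simp [clTraj]
  | succ n ih =>
    rw [Finset.sum_range_succ, add_comm (Finset.sum _ _), ← add_assoc]
    exact (add_le_add_left (h (clTraj f μ x n)) _).trans ih

theorem mul_Vcl_le {X U : Type*} {f : X → U → X} {ℓ : X → U → ℝ≥0∞} {μ : X → U}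
    {W : X → ℝ≥0∞} {a : ℝ≥0∞} (h : ∀ x, W (f x (μ x)) + a * ℓ x (μ x) ≤ W x) (x : X) :
    a * Vcl f ℓ μ x ≤ W x := by
  rw [Vcl, ← ENNReal.tsum_mul_left, ENNReal.tsum_eq_iSup_nat]
  exact iSup_le fun n => le_add_self.trans (clTraj_add_sum_le h x n)

/-- Relaxed dynamic programming: if
`Ṽ(x) ≥ Ṽ(f(x, μ̃(x))) + α·ℓ(x, μ̃(x))` for all `x`, then for all `x`
`α·V_∞(x) ≤ α·V_∞^{μ̃}(x) ≤ Ṽ(x)`. -/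
theorem relaxed_dynamic_programming {X U : Type*} [Nonempty X] [Nonempty U]
    (f : X → U → X) (ℓ : X → U → ℝ≥0∞) (μt : X → U) (Vt : X → ℝ≥0∞)
    (α : ℝ) (hα : α ∈ Set.Icc (0 : ℝ) 1)
    (hrel : ∀ x : X, Vt x ≥ Vt (f x (μt x)) + ENNReal.ofReal α * ℓ x (μt x)) :
    ∀ x : X,
      ENNReal.ofReal α * Vinf f ℓ x ≤ ENNReal.ofReal α * Vcl f ℓ μt x ∧
        ENNReal.ofReal α * Vcl f ℓ μt x ≤ Vt x := by
  exact fun x => ⟨mul_le_mul_right (Vinf_le_Vcl f ℓ μt x) _, mul_Vcl_le hrel x⟩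
end

section
/- (Lemma: Infinite vs reduced-horizon value functions.) Let M ≥ 1 and let μ : X → U be a feedback law that is optimal for the M-horizon problem in the sense that V_M(x) = ℓ(x, μ(x)) + V_{M−1}(f(x, μ(x))) for all x ∈ X. Let α ∈ [0,1] be a real number and assume that for all x ∈ X, writing x⁺ = f(x, μ(x)), one has V_M(x⁺) ≤ V_{M−1}(x⁺) + (1−α)·ℓ(x, μ(x)). Then V_M satisfies the relaxed dynamic-programming inequality V_M(x) ≥ V_M(f(x, μ(x))) + α·ℓ(x, μ(x)) for all x, and consequently α·V_∞^μ(x) ≤ V_M(x) for all x ∈ X. -/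
open scoped ENNReal

/-- A function satisfying the relaxed dynamic-programming inequality with factor `a`
bounds `a` times the closed-loop infinite-horizon cost. -/
theorem mul_Vcl_le_of_relaxed_dp {X U : Type*} (f : X → U → X) (ℓ : X → U → ℝ≥0∞)
    (μ : X → U) (a : ℝ≥0∞) (W : X → ℝ≥0∞)
    (hW : ∀ x : X, W (f x (μ x)) + a * ℓ x (μ x) ≤ W x) (x : X) :
    a * Vcl f ℓ μ x ≤ W x := by
  have hpartial : ∀ n : ℕ,
      W (clTraj f μ x n)
        + ∑ k ∈ Finset.range n, a * ℓ (clTraj f μ x k) (μ (clTraj f μ x k)) ≤ W x := by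
    intro n
    induction n with
    | zero => simp [clTraj]
    | succ n ih =>
      rw [Finset.sum_range_succ, add_comm (Finset.sum _ _), ← add_assoc]
      exact (add_le_add_left (hW (clTraj f μ x n)) _).trans ih
  rw [Vcl, ← ENNReal.tsum_mul_left, ENNReal.tsum_eq_iSup_nat]
  exact iSup_le fun n => le_add_self.trans (hpartial n)

/-- Infinite vs reduced-horizon value functions: if `μ` is optimal for the
`M`-horizon problem and
`V_M(x⁺) ≤ V_{M-1}(x⁺) + (1-α)·ℓ(x, μ(x))` with `x⁺ = f(x, μ(x))`, then `V_M`
satisfies the relaxed dynamic-programming inequality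
`V_M(x) ≥ V_M(f(x, μ(x))) + α·ℓ(x, μ(x))`, and consequently
`α·V_∞^μ(x) ≤ V_M(x)` for all `x`. -/
theorem reduced_horizon_relaxed_dp {X U : Type*} [Nonempty X] [Nonempty U]
    (f : X → U → X) (ℓ : X → U → ℝ≥0∞) (M : ℕ) (hM : 1 ≤ M) (μ : X → U)
    (hopt : ∀ x : X, V f ℓ M x = ℓ x (μ x) + V f ℓ (M - 1) (f x (μ x)))
    (α : ℝ) (hα : α ∈ Set.Icc (0 : ℝ) 1)
    (hcond : ∀ x : X,
      V f ℓ M (f x (μ x)) ≤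
        V f ℓ (M - 1) (f x (μ x)) + ENNReal.ofReal (1 - α) * ℓ x (μ x)) :
    (∀ x : X, V f ℓ M x ≥ V f ℓ M (f x (μ x)) + ENNReal.ofReal α * ℓ x (μ x)) ∧
      ∀ x : X, ENNReal.ofReal α * Vcl f ℓ μ x ≤ V f ℓ M x := by
  have hdp : ∀ x : X,
      V f ℓ M (f x (μ x)) + ENNReal.ofReal α * ℓ x (μ x) ≤ V f ℓ M x := by
    intro x
    have hsum : ENNReal.ofReal (1 - α) + ENNReal.ofReal α = 1 := by
      rw [← ENNReal.ofReal_add (sub_nonneg.2 hα.2) hα.1, sub_add_cancel, ENNReal.ofReal_one]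
    calc V f ℓ M (f x (μ x)) + ENNReal.ofReal α * ℓ x (μ x)
        ≤ V f ℓ (M - 1) (f x (μ x)) + ENNReal.ofReal (1 - α) * ℓ x (μ x)
            + ENNReal.ofReal α * ℓ x (μ x) := by gcongr; exact hcond x
      _ = V f ℓ M x := by
          rw [add_assoc, ← add_mul, hsum, one_mul, hopt x, add_comm]
  exact ⟨hdp, mul_Vcl_le_of_relaxed_dp f ℓ μ _ _ hdp⟩
end

section
/- (Theorem 1, suboptimality estimate for the reduced-horizon feedback, relative form.) Under the hypotheses of Theorem 1 (M = N − N_B ≥ 2, real γ > 0 with (γ+1)^{M−2} > γ^M, Assumption (γ, M), and the relaxed-increment condition V_M(f(x,μ_M(x))) ≤ V_{M−1}(f(x,μ_M(x))) + (γ^M/(γ+1)^{M−2})·ℓ(x, μ_M(x)) for all x ∈ X), for every x ∈ X with 0 < V_∞(x) < ∞ one has (V_∞^{μ_M}(x) − V_∞(x)) / V_∞(x) ≤ γ^M / ((γ+1)^{M−2} − γ^M). -/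
open scoped ENNReal

theorem traj_congr {X U : Type*} (f : X → U → X) (x : X) {u v : ℕ → U} {n : ℕ}
    (h : ∀ k < n, u k = v k) : traj f x u n = traj f x v n := by
  induction n with
  | zero => rfl
  | succ n ih =>
    simp only [traj]
    rw [ih fun k hk => h k (by omega), h n (by omega)]

theorem V_le_Vinf {X U : Type*} [Nonempty U] (f : X → U → X) (ℓ : X → U → ℝ≥0∞) (N : ℕ)
    (x : X) : V f ℓ N x ≤ Vinf f ℓ x := by
  refine le_iInf fun u => ?_
  have hu : ∀ k < N, extSeq (fun i : Fin N => u i) k = u k := fun k hk => by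
    simp [extSeq, hk]
  refine (iInf_le _ fun i : Fin N => u i).trans ?_
  refine le_trans (le_of_eq ?_) (ENNReal.sum_le_tsum (Finset.range N))
  refine Finset.sum_congr rfl fun k hk => ?_
  have hkN := Finset.mem_range.mp hk
  rw [hu k hkN, traj_congr f x fun j hj => hu j (hj.trans hkN)]

/-- Relaxed dynamic programming: partial closed-loop costs telescope. -/
theorem sum_clTraj_add_le {X U : Type*} {f : X → U → X} {ℓ : X → U → ℝ≥0∞} {μ : X → U}
    {W : X → ℝ≥0∞} {c : ℝ≥0∞}
    (hW : ∀ x, ℓ x (μ x) + W (f x (μ x)) ≤ W x + c * ℓ x (μ x)) (x : X) (n : ℕ) :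
    ∑ k ∈ Finset.range n, ℓ (clTraj f μ x k) (μ (clTraj f μ x k)) + W (clTraj f μ x n) ≤
      W x + c * ∑ k ∈ Finset.range n, ℓ (clTraj f μ x k) (μ (clTraj f μ x k)) := by
  induction n with
  | zero => simp [clTraj]
  | succ n ih =>
    rw [Finset.sum_range_succ, mul_add, add_assoc, ← add_assoc (W x)]
    refine (add_le_add_right (hW _) _).trans ?_
    rw [← add_assoc]
    exact add_le_add_left ih _

theorem le_ofReal_mul_of_le_add_mul {a v : ℝ≥0∞} {c : ℝ} (hc0 : 0 ≤ c) (hc1 : c < 1)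
    (ha : a ≠ ⊤) (h : a ≤ v + ENNReal.ofReal c * a) :
    a ≤ v + ENNReal.ofReal (c / (1 - c)) * v := by
  have hd : 0 < 1 - c := by linarith
  rcases eq_or_ne v ⊤ with rfl | hv
  · simp
  lift a to NNReal using ha
  lift v to NNReal using hv
  lift c to NNReal using hc0
  have hr : 0 ≤ (c : ℝ) / (1 - c) := by positivity
  have h' : (a : ℝ) ≤ v + c * a := by
    rw [ENNReal.ofReal_coe_nnreal] at h
    exact_mod_cast h
  rw [← ENNReal.ofReal_coe_nnreal (p := a), ← ENNReal.ofReal_coe_nnreal (p := v),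
    ← ENNReal.ofReal_mul hr, ← ENNReal.ofReal_add v.coe_nonneg (mul_nonneg hr v.coe_nonneg)]
  refine ENNReal.ofReal_le_ofReal ?_
  have : (v : ℝ) + c / (1 - c) * v = v / (1 - c) := by
    field_simp
    ring
  rw [this, le_div_iff₀ hd]
  linarith

/-- Relaxed dynamic programming: suboptimality estimate for the closed-loop cost. -/
theorem Vcl_le_of_relaxed {X U : Type*} {f : X → U → X} {ℓ : X → U → ℝ≥0∞} {μ : X → U}
    {W : X → ℝ≥0∞} {c : ℝ} (hc0 : 0 ≤ c) (hc1 : c < 1)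
    (hℓ : ∀ x, ℓ x (μ x) ≤ W x)
    (hW : ∀ x, ℓ x (μ x) + W (f x (μ x)) ≤ W x + ENNReal.ofReal c * ℓ x (μ x))
    {x : X} (hx : W x ≠ ⊤) :
    Vcl f ℓ μ x ≤ W x + ENNReal.ofReal (c / (1 - c)) * W x := by
  have hsum := sum_clTraj_add_le hW x
  have hfin : ∀ n, ∑ k ∈ Finset.range n, ℓ (clTraj f μ x k) (μ (clTraj f μ x k)) ≠ ⊤ := by
    intro n
    induction n with
    | zero => simp
    | succ n ih =>
      rw [Finset.sum_range_succ]
      refine ne_top_of_le_ne_top ?_ ((add_le_add_right (hℓ _) _).trans (hsum n))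
      exact ENNReal.add_ne_top.mpr ⟨hx, ENNReal.mul_ne_top ENNReal.ofReal_ne_top ih⟩
  exact ENNReal.tsum_le_of_sum_range_le fun n =>
    le_ofReal_mul_of_le_add_mul hc0 hc1 (hfin n) (le_self_add.trans (hsum n))

/-- Theorem 1 (relative form): under the hypotheses of Theorem 1, for every `x`
with `0 < V_∞(x) < ∞`,
`(V_∞^{μ_M}(x) - V_∞(x)) / V_∞(x) ≤ γ^M / ((γ+1)^{M-2} - γ^M)`. -/
theorem reduced_horizon_suboptimality_rel {X U : Type*} [Nonempty X] [Nonempty U]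
    (f : X → U → X) (ℓ : X → U → ℝ≥0∞) (N NB : ℕ) (hM : 2 ≤ N - NB)
    (γ : ℝ) (hγ : 0 < γ)
    (hstrict : γ ^ (N - NB) < (γ + 1) ^ (N - NB - 2))
    (μ : ℕ → X → U)
    (hDP : ∀ k, 2 ≤ k → k ≤ N - NB → ∀ x : X,
      V f ℓ k x = ℓ x (μ k x) + V f ℓ (k - 1) (f x (μ k x)))
    (h2 : ∀ x : X, V f ℓ 2 x ≤ ENNReal.ofReal (γ + 1) * V f ℓ 1 x)
    (hk : ∀ k, 2 ≤ k → k ≤ N - NB → ∀ x : X,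
      V f ℓ k x ≤ ENNReal.ofReal (γ + 1) * ℓ x (μ k x))
    (hinc : ∀ x : X,
      V f ℓ (N - NB) (f x (μ (N - NB) x)) ≤
        V f ℓ (N - NB - 1) (f x (μ (N - NB) x)) +
          ENNReal.ofReal (γ ^ (N - NB) / (γ + 1) ^ (N - NB - 2)) *
            ℓ x (μ (N - NB) x))
    (x : X) (hpos : 0 < Vinf f ℓ x) (hfin : Vinf f ℓ x < ⊤) :
    (Vcl f ℓ (μ (N - NB)) x - Vinf f ℓ x) / Vinf f ℓ x ≤
      ENNReal.ofReal
        (γ ^ (N - NB) / ((γ + 1) ^ (N - NB - 2) - γ ^ (N - NB))) := by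
  set M := N - NB
  have hq : 0 < (γ + 1) ^ (M - 2) := by positivity
  have hp : 0 ≤ γ ^ M / (γ + 1) ^ (M - 2) := by positivity
  have hc1 : γ ^ M / (γ + 1) ^ (M - 2) < 1 := (div_lt_one hq).mpr hstrict
  have hratio : γ ^ M / (γ + 1) ^ (M - 2) / (1 - γ ^ M / (γ + 1) ^ (M - 2)) =
      γ ^ M / ((γ + 1) ^ (M - 2) - γ ^ M) := by
    rw [one_sub_div hq.ne', div_div_div_cancel_right₀ hq.ne']
  have hV : V f ℓ M x ≤ Vinf f ℓ x := V_le_Vinf f ℓ M x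
  have hcl := Vcl_le_of_relaxed (f := f) (ℓ := ℓ) (μ := μ M) (W := V f ℓ M) hp hc1
    (fun y => by rw [hDP M hM le_rfl y]; exact le_self_add)
    (fun y => by
      rw [hDP M hM le_rfl y, add_assoc]
      exact add_le_add_right (hinc y) _)
    (hV.trans_lt hfin).ne
  rw [hratio] at hcl
  refine ENNReal.div_le_of_le_mul (tsub_le_iff_left.mpr (hcl.trans ?_))
  gcongr
end
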